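/- arXiv:0903.4508 — 2 statements merged into one kernel-verified Lean document; each statement's English description precedes it below -/
import Mathlib

section
/- With the weighted uniform initial qubit φ^WU, the walk is covariant under the cyclic letter shift: let σ(g) be the reduced word obtained from g by replacing every letter l with l+1 (mod κ). Then for all t ≥ 0, all reduced words g and all letters j, α_t(σ(g), j+1 mod κ) = ω·α_t(g, j). -/
noncomputable section

/-- Left multiplication of a reduced word by a letter:
`j · g` removes the first letter if it equals `j`, otherwise prepends `j`. -/
def lmul (j : ℕ) (g : List ℕ) : List ℕ :=
  match g with
  | [] => [j]
  | k :: rest => if k = j then rest else j :: k :: rest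

/-- `g` is a reduced word over the alphabet `{0, …, κ-1}`:
all letters are `< κ` and no two consecutive letters are equal. -/
def WordReduced (κ : ℕ) (g : List ℕ) : Prop :=
  (∀ l ∈ g, l < κ) ∧ g.Chain' (· ≠ ·)

/-- Grover-walk amplitudes on the Cayley tree with initial qubit `φ`:
`alpha κ φ 0 g j = φ j` if `g = e` and `0` otherwise, and
`alpha κ φ (t+1) g j = ∑_{k<κ} (2/κ - δ_{jk}) · alpha κ φ t (j·g) k`. -/
noncomputable def alpha (κ : ℕ) (φ : ℕ → ℂ) : ℕ → List ℕ → ℕ → ℂ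
  | 0, g, j => if g = [] then φ j else 0
  | t + 1, g, j =>
      ∑ k ∈ Finset.range κ, ((2 / (κ : ℂ)) - (if j = k then 1 else 0)) * alpha κ φ t (lmul j g) k

/-- `ω = exp(2πi/κ)`. -/
noncomputable def omega (κ : ℕ) : ℂ := Complex.exp (2 * Real.pi * Complex.I / κ)

/-- The weighted uniform initial qubit `φ^WU(j) = ω^j/√κ`. -/
noncomputable def phiWU (κ : ℕ) : ℕ → ℂ := fun j => omega κ ^ j / ((Real.sqrt κ : ℝ) : ℂ)

/-!
The Grover coefficients `2/κ - δ_{jk}` and left multiplication depend only on which letters are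
equal, so every permutation of the alphabet is a symmetry of the evolution. If it multiplies the
initial qubit by a scalar, then by induction on time it multiplies all amplitudes by that scalar.
For `φ^WU` and the cyclic shift the scalar is `ω`, the wrap-around being absorbed by `ω ^ κ = 1`.
-/

theorem eq_or_mem_of_mem_lmul {j l : ℕ} {g : List ℕ} (hl : l ∈ lmul j g) : l = j ∨ l ∈ g := by
  cases g with
  | nil => exact Or.inl (List.mem_singleton.1 hl)
  | cons k rest =>
    simp only [lmul] at hl
    split_ifs at hl
    · exact Or.inr (List.mem_cons_of_mem k hl)
    · exact List.mem_cons.1 hl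

theorem lmul_map {σ : ℕ → ℕ} {s : Set ℕ} (hσ : s.InjOn σ) {j : ℕ} {g : List ℕ}
    (hj : j ∈ s) (hg : ∀ l ∈ g, l ∈ s) :
    lmul (σ j) (g.map σ) = (lmul j g).map σ := by
  cases g with
  | nil => rfl
  | cons k rest =>
    have hkj : σ k = σ j ↔ k = j := hσ.eq_iff (hg k List.mem_cons_self) hj
    simp only [lmul, List.map_cons, hkj, apply_ite (List.map σ)]

theorem sum_range_comp_of_bijOn {M : Type*} [AddCommMonoid M] {n : ℕ} {σ : ℕ → ℕ}
    (hσ : (Set.Iio n).BijOn σ (Set.Iio n)) (f : ℕ → M) :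
    ∑ k ∈ Finset.range n, f (σ k) = ∑ k ∈ Finset.range n, f k := by
  rw [← Finset.coe_range] at hσ
  exact Finset.sum_nbij σ hσ.mapsTo hσ.injOn hσ.surjOn fun _ _ => rfl

theorem bijOn_succ_mod (κ : ℕ) : (Set.Iio κ).BijOn (fun l => (l + 1) % κ) (Set.Iio κ) := by
  have mapsTo : (Set.Iio κ).MapsTo (fun l => (l + 1) % κ) (Set.Iio κ) :=
    fun l hl => Nat.mod_lt _ (Nat.zero_lt_of_lt hl)
  have injOn : (Set.Iio κ).InjOn (fun l => (l + 1) % κ) :=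
    fun a ha b hb hab => (Nat.ModEq.add_right_cancel' 1 hab).eq_of_lt_of_lt ha hb
  exact ((Set.finite_Iio κ).injOn_iff_bijOn_of_mapsTo mapsTo).1 injOn

theorem omega_pow_self (κ : ℕ) : omega κ ^ κ = 1 := by
  rcases eq_or_ne κ 0 with rfl | hκ
  · exact pow_zero _
  · exact (Complex.isPrimitiveRoot_exp κ hκ).pow_eq_one

theorem phiWU_succ_mod (κ j : ℕ) : phiWU κ ((j + 1) % κ) = omega κ * phiWU κ j := by
  simp only [phiWU]
  rw [← pow_eq_pow_mod (j + 1) (omega_pow_self κ), pow_succ', mul_div_assoc]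

theorem grover_tree_weighted_shift_covariance_general {κ : ℕ} {φ : ℕ → ℂ} {σ : ℕ → ℕ} {c : ℂ}
    (hσ : (Set.Iio κ).BijOn σ (Set.Iio κ)) (hφ : ∀ j < κ, φ (σ j) = c * φ j)
    (t : ℕ) {g : List ℕ} {j : ℕ} (hg : ∀ l ∈ g, l < κ) (hj : j < κ) :
    alpha κ φ t (g.map σ) (σ j) = c * alpha κ φ t g j := by
  induction t generalizing g j with
  | zero => simp only [alpha, List.map_eq_nil_iff, hφ j hj, mul_ite, mul_zero]
  | succ t ih =>
    have hjg : ∀ l ∈ lmul j g, l < κ := fun l hl =>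
      (eq_or_mem_of_mem_lmul hl).elim (fun hlj => hlj ▸ hj) (hg l)
    simp only [alpha]
    rw [lmul_map hσ.injOn hj hg, ← sum_range_comp_of_bijOn hσ, Finset.mul_sum]
    refine Finset.sum_congr rfl fun k hk => ?_
    have hk' : k < κ := Finset.mem_range.1 hk
    have hjk : σ j = σ k ↔ j = k := hσ.injOn.eq_iff hj hk'
    simp only [ih hjg hk', hjk, mul_left_comm]

/-- With the weighted uniform initial qubit `φ^WU`, the walk is covariant
under the cyclic letter shift `l ↦ l + 1 (mod κ)`:
`α_t(σ(g), j+1 mod κ) = ω · α_t(g, j)`. -/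
theorem grover_tree_weighted_shift_covariance
    (κ : ℕ) (hκ : 3 ≤ κ) (t : ℕ) (g : List ℕ) (j : ℕ)
    (hg : WordReduced κ g) (hj : j < κ) :
    alpha κ (phiWU κ) t (g.map fun l => (l + 1) % κ) ((j + 1) % κ)
      = omega κ * alpha κ (phiWU κ) t g j :=
  grover_tree_weighted_shift_covariance_general (bijOn_succ_mod κ) (fun j _ => phiWU_succ_mod κ j)
    t hg.1 hj

end
end

section
/- The function f_κ is a probability density: for every integer κ ≥ 3, with a = 2√(κ−1)/κ, ∫_0^a (κ−2)·x² / (π·(1−x²)·√(a²−x²)) dx = 1. -/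
/-!
Write `b = √(1 - a²)`. The function `x ↦ arcsin (b x / (a √(1 - x²))) / π` is a primitive of the
Konno density on `(-a, a)` which, unlike the more obvious `x ↦ arctan (b x / √(a² - x²)) / π`,
extends continuously to the endpoints by its own formula; so the density has mass `1 / 2` on
`[0, a]`. Since `x² / (1 - x²) = 1 / (1 - x²) - 1`, the second moment differs from the mass by a
multiple of the arcsine integral `∫ 1 / √(a² - x²)`, and on `[0, a]` it equals `(1 - b) / 2`.
For `a = 2√(κ - 1) / κ` one has `b = (κ - 2) / κ`, whence `κ (1 - b) / 2 = 1`.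
-/

open Real Set MeasureTheory

theorem hasDerivAt_arcsin_of_sq_add_sq_eq_one {y z : ℝ} (hz : 0 < z) (h : y ^ 2 + z ^ 2 = 1) :
    HasDerivAt arcsin (1 / z) y := by
  have hsqrt : √(1 - y ^ 2) = z := by rw [← h, add_sub_cancel_left, sqrt_sq hz.le]
  rw [← hsqrt]
  exact hasDerivAt_arcsin (by nlinarith) (by nlinarith)

theorem hasDerivAt_div_sqrt_one_sub_sq {x : ℝ} (hx : 0 < 1 - x ^ 2) :
    HasDerivAt (fun x : ℝ ↦ x / √(1 - x ^ 2)) (1 / √(1 - x ^ 2) ^ 3) x := by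
  have hsqrt_pos : 0 < √(1 - x ^ 2) := sqrt_pos.2 hx
  have hsub : HasDerivAt (fun x : ℝ ↦ 1 - x ^ 2) (-(2 * x)) x := by
    simpa using (hasDerivAt_pow 2 x).const_sub 1
  refine ((hasDerivAt_id' x).fun_div (hsub.sqrt hx.ne') hsqrt_pos.ne').congr_deriv ?_
  field_simp
  rw [sq_sqrt hx.le]
  ring

section ArcsineIntegral

variable {a u v x : ℝ}

theorem hasDerivAt_arcsin_div (hx : x ∈ Ioo (-a) a) :
    HasDerivAt (fun x ↦ arcsin (x / a)) (1 / √(a ^ 2 - x ^ 2)) x := by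
  have ha : 0 < a := by linarith [hx.1, hx.2]
  have hpos : 0 < a ^ 2 - x ^ 2 := by nlinarith [hx.1, hx.2]
  have hcircle : (x / a) ^ 2 + (√(a ^ 2 - x ^ 2) / a) ^ 2 = 1 := by
    rw [div_pow, div_pow, sq_sqrt hpos.le]
    field_simp
    ring
  refine ((hasDerivAt_arcsin_of_sq_add_sq_eq_one (div_pos (sqrt_pos.2 hpos) ha) hcircle).comp x
    ((hasDerivAt_id' x).div_const a)).congr_deriv ?_
  field_simp

theorem intervalIntegrable_one_div_sqrt_sq_sub_sq (hu : u ∈ Icc (-a) a) (hv : v ∈ Icc (-a) a) :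
    IntervalIntegrable (fun x ↦ 1 / √(a ^ 2 - x ^ 2)) volume u v :=
  intervalIntegral.intervalIntegrable_deriv_of_nonneg (g := fun x ↦ arcsin (x / a)) (by fun_prop)
    (fun _ hx ↦ hasDerivAt_arcsin_div
      (Ioo_subset_Ioo (le_min hu.1 hv.1) (max_le hu.2 hv.2) hx))
    fun _ _ ↦ by positivity

theorem integral_one_div_sqrt_sq_sub_sq (hu : u ∈ Icc (-a) a) (hv : v ∈ Icc (-a) a) :
    ∫ x in u..v, 1 / √(a ^ 2 - x ^ 2) = arcsin (v / a) - arcsin (u / a) :=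
  intervalIntegral.integral_eq_sub_of_hasDeriv_right (f := fun x ↦ arcsin (x / a)) (by fun_prop)
    (fun _ hx ↦ (hasDerivAt_arcsin_div
      (Ioo_subset_Ioo (le_min hu.1 hv.1) (max_le hu.2 hv.2) hx)).hasDerivWithinAt)
    (intervalIntegrable_one_div_sqrt_sq_sub_sq hu hv)

end ArcsineIntegral

/-- The density `μ_K(x; a)` of the Konno distribution with parameter `a ∈ (0, 1)`, the limit law of
quantum walks. For `|x| ≥ a` the square root in the denominator is `0`, so that division by zero
gives the density the intended value `0` outside `(-a, a)`. -/
noncomputable def konnoDensity (a x : ℝ) : ℝ :=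
  √(1 - a ^ 2) / (π * (1 - x ^ 2) * √(a ^ 2 - x ^ 2))

/-- The odd primitive of the Konno density on `[-a, a]`, i.e. its distribution function minus
`1 / 2`. -/
noncomputable def konnoPrimitive (a x : ℝ) : ℝ :=
  arcsin (√(1 - a ^ 2) / a * (x / √(1 - x ^ 2))) / π

section Konno

variable {a u v x : ℝ}

theorem one_sub_sq_pos_of_mem_Icc (ha₁ : a < 1) (hx : x ∈ Icc (-a) a) : 0 < 1 - x ^ 2 := by
  nlinarith [hx.1, hx.2]

theorem konnoDensity_nonneg (ha₁ : a < 1) (hx : x ∈ Icc (-a) a) : 0 ≤ konnoDensity a x := by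
  have := one_sub_sq_pos_of_mem_Icc ha₁ hx
  unfold konnoDensity
  positivity

theorem hasDerivAt_konnoPrimitive (ha₁ : a < 1) (hx : x ∈ Ioo (-a) a) :
    HasDerivAt (konnoPrimitive a) (konnoDensity a x) x := by
  have ha : 0 < a := by linarith [hx.1, hx.2]
  have hs : 0 < 1 - x ^ 2 := one_sub_sq_pos_of_mem_Icc ha₁ (Ioo_subset_Icc_self hx)
  have ht : 0 < a ^ 2 - x ^ 2 := by nlinarith [hx.1, hx.2]
  have hb : 0 < 1 - a ^ 2 := by nlinarith
  have hcircle_pos : 0 < √(a ^ 2 - x ^ 2) / (a * √(1 - x ^ 2)) :=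
    div_pos (sqrt_pos.2 ht) (mul_pos ha (sqrt_pos.2 hs))
  have hcircle : (√(1 - a ^ 2) / a * (x / √(1 - x ^ 2))) ^ 2
      + (√(a ^ 2 - x ^ 2) / (a * √(1 - x ^ 2))) ^ 2 = 1 := by
    simp only [mul_pow, div_pow, sq_sqrt hs.le, sq_sqrt ht.le, sq_sqrt hb.le]
    field_simp
    ring
  refine (((hasDerivAt_arcsin_of_sq_add_sq_eq_one hcircle_pos hcircle).comp x
    ((hasDerivAt_div_sqrt_one_sub_sq hs).const_mul (√(1 - a ^ 2) / a))).div_const π).congr_deriv ?_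
  rw [konnoDensity]
  field_simp
  rw [sq_sqrt hs.le]

theorem continuousOn_konnoPrimitive (ha₁ : a < 1) :
    ContinuousOn (konnoPrimitive a) (Icc (-a) a) := by
  have hsqrt_ne : ∀ x ∈ Icc (-a) a, √(1 - x ^ 2) ≠ 0 := fun x hx ↦
    (sqrt_pos.2 (one_sub_sq_pos_of_mem_Icc ha₁ hx)).ne'
  have hquot : ContinuousOn (fun x ↦ x / √(1 - x ^ 2)) (Icc (-a) a) :=
    ContinuousOn.div (by fun_prop) (by fun_prop) hsqrt_ne
  exact (continuous_arcsin.comp_continuousOn (hquot.const_mul _)).div_const π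

theorem intervalIntegrable_konnoDensity (ha₁ : a < 1) (hu : u ∈ Icc (-a) a)
    (hv : v ∈ Icc (-a) a) : IntervalIntegrable (konnoDensity a) volume u v := by
  have hsub : Ioo (min u v) (max u v) ⊆ Ioo (-a) a :=
    Ioo_subset_Ioo (le_min hu.1 hv.1) (max_le hu.2 hv.2)
  exact intervalIntegral.intervalIntegrable_deriv_of_nonneg
    ((continuousOn_konnoPrimitive ha₁).mono (uIcc_subset_Icc hu hv))
    (fun _ hx ↦ hasDerivAt_konnoPrimitive ha₁ (hsub hx))
    fun _ hx ↦ konnoDensity_nonneg ha₁ (Ioo_subset_Icc_self (hsub hx))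

theorem integral_konnoDensity (ha₁ : a < 1) (hu : u ∈ Icc (-a) a) (hv : v ∈ Icc (-a) a) :
    ∫ x in u..v, konnoDensity a x = konnoPrimitive a v - konnoPrimitive a u :=
  intervalIntegral.integral_eq_sub_of_hasDeriv_right
    ((continuousOn_konnoPrimitive ha₁).mono (uIcc_subset_Icc hu hv))
    (fun _ hx ↦ (hasDerivAt_konnoPrimitive ha₁
      (Ioo_subset_Ioo (le_min hu.1 hv.1) (max_le hu.2 hv.2) hx)).hasDerivWithinAt)
    (intervalIntegrable_konnoDensity ha₁ hu hv)

theorem konnoPrimitive_zero : konnoPrimitive a 0 = 0 := by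
  simp [konnoPrimitive]

theorem konnoPrimitive_self (ha : 0 < a) (ha₁ : a < 1) : konnoPrimitive a a = 1 / 2 := by
  have hb : √(1 - a ^ 2) ≠ 0 := (sqrt_pos.2 (by nlinarith)).ne'
  have harg : √(1 - a ^ 2) / a * (a / √(1 - a ^ 2)) = 1 := by field_simp
  rw [konnoPrimitive, harg, arcsin_one]
  field_simp

theorem sq_mul_konnoDensity (hx : x ^ 2 ≠ 1) :
    x ^ 2 * konnoDensity a x
      = konnoDensity a x - √(1 - a ^ 2) / π * (1 / √(a ^ 2 - x ^ 2)) := by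
  have hne : 1 - x ^ 2 ≠ 0 := sub_ne_zero.2 hx.symm
  rw [konnoDensity]
  field_simp
  ring

theorem integral_sq_mul_konnoDensity (ha : 0 < a) (ha₁ : a < 1) :
    ∫ x in 0..a, x ^ 2 * konnoDensity a x = (1 - √(1 - a ^ 2)) / 2 := by
  have h_zero : (0 : ℝ) ∈ Icc (-a) a := ⟨by linarith, ha.le⟩
  have h_self : a ∈ Icc (-a) a := ⟨by linarith, le_rfl⟩
  have hsplit : EqOn (fun x ↦ x ^ 2 * konnoDensity a x)
      (fun x ↦ konnoDensity a x - √(1 - a ^ 2) / π * (1 / √(a ^ 2 - x ^ 2))) (uIcc 0 a) :=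
    fun x hx ↦ sq_mul_konnoDensity
      (sub_pos.1 (one_sub_sq_pos_of_mem_Icc ha₁ (uIcc_subset_Icc h_zero h_self hx))).ne
  rw [intervalIntegral.integral_congr hsplit,
    intervalIntegral.integral_sub (intervalIntegrable_konnoDensity ha₁ h_zero h_self)
      ((intervalIntegrable_one_div_sqrt_sq_sub_sq h_zero h_self).const_mul _),
    intervalIntegral.integral_const_mul, integral_konnoDensity ha₁ h_zero h_self,
    integral_one_div_sqrt_sq_sub_sq h_zero h_self, konnoPrimitive_self ha ha₁,
    konnoPrimitive_zero, div_self ha.ne', arcsin_one, zero_div, arcsin_zero]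
  field_simp
  ring

end Konno

theorem one_sub_sq_two_mul_sqrt_sub_one_div {κ : ℝ} (hκ : 1 ≤ κ) :
    1 - (2 * √(κ - 1) / κ) ^ 2 = ((κ - 2) / κ) ^ 2 := by
  have hκ_ne : κ ≠ 0 := by linarith
  rw [div_pow, mul_pow, sq_sqrt (by linarith)]
  field_simp
  ring

theorem konno_weighted_density_integral_eq_one_general
    {κ a : ℝ} (hκ : 2 < κ) (ha : a = 2 * √(κ - 1) / κ) :
    ∫ x in 0..a, (κ - 2) * x ^ 2 / (π * (1 - x ^ 2) * √(a ^ 2 - x ^ 2)) = 1 := by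
  have hκ_pos : 0 < κ := by linarith
  have hb_pos : 0 < (κ - 2) / κ := div_pos (by linarith) hκ_pos
  have hb : 1 - a ^ 2 = ((κ - 2) / κ) ^ 2 :=
    ha ▸ one_sub_sq_two_mul_sqrt_sub_one_div (by linarith)
  have hb_sqrt : √(1 - a ^ 2) = (κ - 2) / κ := by rw [hb, sqrt_sq hb_pos.le]
  have ha_pos : 0 < a := ha ▸ div_pos (mul_pos two_pos (sqrt_pos.2 (by linarith))) hκ_pos
  have ha_lt_one : a < 1 := by nlinarith [pow_pos hb_pos 2]
  calc ∫ x in 0..a, (κ - 2) * x ^ 2 / (π * (1 - x ^ 2) * √(a ^ 2 - x ^ 2))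
      = ∫ x in 0..a, κ * (x ^ 2 * konnoDensity a x) := by
        refine intervalIntegral.integral_congr fun x _ ↦ ?_
        simp only [konnoDensity, hb_sqrt]
        field_simp
    _ = κ * ((1 - (κ - 2) / κ) / 2) := by
        rw [intervalIntegral.integral_const_mul, integral_sq_mul_konnoDensity ha_pos ha_lt_one,
          hb_sqrt]
    _ = 1 := by
        field_simp
        ring

/-- The function `f_κ` is a probability density: for every integer
`κ ≥ 3`, with `a = 2√(κ−1)/κ`,
`∫_0^a (κ−2)·x² / (π·(1−x²)·√(a²−x²)) dx = 1`. -/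
theorem konno_weighted_density_integral_eq_one
    (κ : ℕ) (hκ : 3 ≤ κ) (a : ℝ) (ha : a = 2 * Real.sqrt ((κ : ℝ) - 1) / κ) :
    ∫ x in (0 : ℝ)..a,
      ((κ : ℝ) - 2) * x ^ 2 / (Real.pi * (1 - x ^ 2) * Real.sqrt (a ^ 2 - x ^ 2)) = 1 := by
  exact konno_weighted_density_integral_eq_one_general (Nat.ofNat_lt_cast.2 hκ) ha
end
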